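/- Let ξ be a state on ℓ^∞ invariant under the unit shift T_1, and let a > 0, b ≥ 0. Then ξ({∫_{ak+b−1}^{ak+b} f(t) dt}_{k≥1}) = ξ({f(ak+b)}_{k≥1}), where entries with index k such that ak+b < 1 are set to 0. -/

import Mathlib

open Filter

/-- A bounded real sequence (an element of `ℓ^∞`). -/
def IsBddSeq (a : ℕ → ℝ) : Prop := ∃ C, ∀ k, |a k| ≤ C

/-- A state on `ℓ^∞`: a positive linear functional with `ξ(1) = 1`
(linearity and positivity are required on bounded sequences). -/
def IsLinfState (ξ : (ℕ → ℝ) → ℝ) : Prop :=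
  (∀ a b : ℕ → ℝ, IsBddSeq a → IsBddSeq b → ξ (a + b) = ξ a + ξ b) ∧
  (∀ (c : ℝ) (a : ℕ → ℝ), IsBddSeq a → ξ (c • a) = c * ξ a) ∧
  (∀ a : ℕ → ℝ, IsBddSeq a → (∀ k, 0 ≤ a k) → 0 ≤ ξ a) ∧
  ξ (fun _ => 1) = 1

/-- A generalised limit: a state on `ℓ^∞` with
`liminf a ≤ ξ a ≤ limsup a` for every bounded nonnegative sequence. -/
def IsGenLim (ξ : (ℕ → ℝ) → ℝ) : Prop :=
  IsLinfState ξ ∧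
  ∀ a : ℕ → ℝ, IsBddSeq a → (∀ k, 0 ≤ a k) →
    liminf a atTop ≤ ξ a ∧ ξ a ≤ limsup a atTop

/-- Invariance under the unit shift `T_1`. -/
def ShiftInv (ξ : (ℕ → ℝ) → ℝ) : Prop :=
  ∀ a : ℕ → ℝ, IsBddSeq a → ξ (fun k => a (k + 1)) = ξ a

/-- Invariance under the dilations `D_j`, `D_j(a)_k = a_{⌈k/j⌉}`
(`⌈k/j⌉ = (k + j - 1)/j` in natural division). -/
def DilInv (ξ : (ℕ → ℝ) → ℝ) : Prop :=
  ∀ j : ℕ, 0 < j → ∀ a : ℕ → ℝ, IsBddSeq a →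
    ξ (fun k => a ((k + j - 1) / j)) = ξ a

/-!
A shift-invariant state ignores finitely many terms and, being positive and normalised, does not
see errors tending to `0`. If `t * f t` is nondecreasing and `|f| ≤ C`, then
`f p ≤ f q + C * (q - p) / p` for `0 < p ≤ q`, so over steps of bounded length `f` is
nondecreasing up to an error that vanishes at infinity. Hence the average of `f` over
`[s - 1, s]` is asymptotically at most `f s`. It is also asymptotically at least `f (s - D)`
for every `D ≥ 1`; taking `D = a * L` with `L` a natural number replaces `s = a * k + b` by an
earlier point of the same progression, and the state does not see the shift by `L`.
-/

open MeasureTheory Set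

namespace IsBddSeq

variable {x y : ℕ → ℝ}

lemma const (c : ℝ) : IsBddSeq fun _ => c := ⟨|c|, fun _ => le_rfl⟩

lemma add (hx : IsBddSeq x) (hy : IsBddSeq y) : IsBddSeq (x + y) := by
  obtain ⟨C, hC⟩ := hx
  obtain ⟨D, hD⟩ := hy
  exact ⟨C + D, fun k => (abs_add_le _ _).trans (add_le_add (hC k) (hD k))⟩

lemma sub (hx : IsBddSeq x) (hy : IsBddSeq y) : IsBddSeq (x - y) := by
  obtain ⟨C, hC⟩ := hx
  obtain ⟨D, hD⟩ := hy
  exact ⟨C + D, fun k => (abs_sub _ _).trans (add_le_add (hC k) (hD k))⟩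

lemma comp (hx : IsBddSeq x) (φ : ℕ → ℕ) : IsBddSeq fun k => x (φ k) :=
  hx.imp fun _ hC k => hC (φ k)

lemma ite_zero {p : ℕ → Prop} [DecidablePred p] {C : ℝ} (h : ∀ k, p k → |x k| ≤ C) :
    IsBddSeq fun k => if p k then x k else 0 := by
  refine ⟨|C|, fun k => ?_⟩
  beta_reduce
  split_ifs with hk
  · exact (h k hk).trans (le_abs_self C)
  · exact abs_zero.trans_le (abs_nonneg C)

end IsBddSeq

section State

variable {ξ : (ℕ → ℝ) → ℝ} {x y : ℕ → ℝ}

lemma IsLinfState.mono (hξ : IsLinfState ξ) (hx : IsBddSeq x) (hy : IsBddSeq y) (h : x ≤ y) :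
    ξ x ≤ ξ y := by
  obtain ⟨map_add, -, map_nonneg, -⟩ := hξ
  calc ξ x ≤ ξ x + ξ (y - x) :=
        le_add_of_nonneg_right (map_nonneg _ (hy.sub hx) fun k => sub_nonneg.2 (h k))
    _ = ξ y := by rw [← map_add _ _ hx (hy.sub hx), add_sub_cancel]

lemma IsLinfState.map_const (hξ : IsLinfState ξ) (c : ℝ) : ξ (fun _ => c) = c := by
  obtain ⟨-, map_smul, -, map_one⟩ := hξ
  calc ξ (fun _ => c) = ξ (c • fun _ => 1) :=
        congrArg ξ (funext fun _ => (mul_one c).symm)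
    _ = c := by rw [map_smul _ _ (.const 1), map_one, mul_one]

lemma ShiftInv.map_add_right (hT : ShiftInv ξ) (hx : IsBddSeq x) (N : ℕ) :
    ξ (fun k => x (k + N)) = ξ x := by
  induction N with
  | zero => rfl
  | succ N ih =>
    simpa only [add_right_comm, add_assoc, ih] using hT _ (hx.comp (· + N))

lemma IsLinfState.le_of_forall_eventually_le_add (hξ : IsLinfState ξ) (hT : ShiftInv ξ)
    (hx : IsBddSeq x) (hy : IsBddSeq y) (h : ∀ ε > 0, ∀ᶠ k in atTop, x k ≤ y k + ε) :
    ξ x ≤ ξ y := by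
  refine le_of_forall_pos_le_add fun ε hε => ?_
  obtain ⟨N, hN⟩ := eventually_atTop.1 (h ε hε)
  have hyN := hy.comp (· + N)
  calc ξ x = ξ fun k => x (k + N) := (hT.map_add_right hx N).symm
    _ ≤ ξ ((fun k => y (k + N)) + fun _ => ε) :=
        hξ.mono (hx.comp (· + N)) (hyN.add (.const ε)) fun k => hN (k + N) (Nat.le_add_left N k)
    _ = ξ y + ε := by
        rw [hξ.1 _ _ hyN (.const ε), hT.map_add_right hy, hξ.map_const]

end State

/-- `f` is asymptotically nondecreasing: over steps of any bounded length, its decrease tends to `0`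
at infinity. This is stronger than Schmidt's condition of slow decrease, where the step length
tends to `0` as well. -/
def AsymptoticallyMonotone (f : ℝ → ℝ) : Prop :=
  ∀ D : ℝ, ∀ ε > 0, ∀ᶠ p in atTop, ∀ q ∈ Icc p (p + D), f p ≤ f q + ε

section MonotoneMul

variable {f : ℝ → ℝ}

lemma locallyIntegrableOn_of_monotoneOn_mul (hf : MonotoneOn (fun t => t * f t) (Ioi 0)) :
    LocallyIntegrableOn f (Ioi 0) := by
  have hmul : LocallyIntegrableOn (fun t => t * f t) (Ioi 0) :=
    (locallyIntegrableOn_iff isOpen_Ioi.isLocallyClosed).2 fun _ hsub hcompact =>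
      (hf.mono hsub).integrableOn_isCompact hcompact
  have hinv : ContinuousOn (fun t : ℝ => t⁻¹) (Ioi 0) :=
    continuousOn_inv₀.mono fun _ ht => ne_of_gt ht
  refine (hmul.continuousOn_mul hinv isOpen_Ioi.isLocallyClosed).congr ?_
  filter_upwards [ae_restrict_mem measurableSet_Ioi] with t ht
  exact inv_mul_cancel_left₀ (ne_of_gt ht) (f t)

lemma le_add_of_monotoneOn_mul {C : ℝ} (hC : ∀ t > 0, |f t| ≤ C)
    (hf : MonotoneOn (fun t => t * f t) (Ioi 0)) {p q : ℝ} (hp : 0 < p) (hpq : p ≤ q) :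
    f p ≤ f q + C * (q - p) / p := by
  have hq : 0 < q := hp.trans_le hpq
  have hmul : p * f p ≤ q * f q := hf hp hq hpq
  have hstep : f q * (q - p) ≤ C * (q - p) :=
    mul_le_mul_of_nonneg_right ((le_abs_self _).trans (hC q hq)) (sub_nonneg.2 hpq)
  rw [← sub_le_iff_le_add', le_div_iff₀ hp]
  linarith

lemma AsymptoticallyMonotone.of_monotoneOn_mul (hfb : ∃ C, ∀ t > 0, |f t| ≤ C)
    (hf : MonotoneOn (fun t => t * f t) (Ioi 0)) : AsymptoticallyMonotone f := by
  obtain ⟨C, hC⟩ := hfb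
  have hC0 : 0 ≤ C := (abs_nonneg _).trans (hC 1 one_pos)
  intro D ε hε
  have hlim : Tendsto (fun p : ℝ => C * D / p) atTop (nhds 0) :=
    tendsto_const_nhds.div_atTop tendsto_id
  filter_upwards [hlim.eventually_le_const hε, eventually_gt_atTop 0] with p hpε hp q ⟨hpq, hqD⟩
  calc f p ≤ f q + C * (q - p) / p := le_add_of_monotoneOn_mul hC hf hp hpq
    _ ≤ f q + C * D / p := by gcongr; linarith
    _ ≤ f q + ε := by gcongr

end MonotoneMul

section UnitAverage

variable {f : ℝ → ℝ}

lemma abs_integral_sub_one_le {C s : ℝ} (hC : ∀ t > 0, |f t| ≤ C) (hs : 1 ≤ s) :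
    |∫ t in (s - 1)..s, f t| ≤ C := by
  have hbound : ∀ t ∈ uIoc (s - 1) s, ‖f t‖ ≤ C := fun t ht =>
    hC t ((sub_nonneg.2 hs).trans_lt (uIoc_of_le (sub_one_lt s).le ▸ ht).1)
  simpa using intervalIntegral.norm_integral_le_of_norm_le_const hbound

lemma intervalIntegrable_sub_one (hfi : LocallyIntegrableOn f (Ioi 0)) {s : ℝ} (hs : 1 < s) :
    IntervalIntegrable f volume (s - 1) s := by
  have hle : s - 1 ≤ s := (sub_one_lt s).le
  refine (intervalIntegrable_iff_integrableOn_Icc_of_le hle).2 ?_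
  exact hfi.integrableOn_compact_subset (fun t ht => (sub_pos.2 hs).trans_le ht.1) isCompact_Icc

namespace AsymptoticallyMonotone

lemma eventually_integral_sub_one_le (hf : AsymptoticallyMonotone f)
    (hfi : LocallyIntegrableOn f (Ioi 0)) {ε : ℝ} (hε : 0 < ε) :
    ∀ᶠ s in atTop, ∫ t in (s - 1)..s, f t ≤ f s + ε := by
  have hsub : Tendsto (fun s : ℝ => s - 1) atTop atTop :=
    tendsto_atTop_add_const_right _ _ tendsto_id
  filter_upwards [hsub.eventually_forall_ge_atTop (hf 1 ε hε), eventually_gt_atTop 1] with s hfs hs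
  calc ∫ t in (s - 1)..s, f t ≤ ∫ _ in (s - 1)..s, (f s + ε) :=
        intervalIntegral.integral_mono_on (sub_one_lt s).le (intervalIntegrable_sub_one hfi hs)
          intervalIntegrable_const fun t ht => hfs t ht.1 s ⟨ht.2, by linarith [ht.1]⟩
    _ = f s + ε := by simp

lemma eventually_le_integral_add_sub_one (hf : AsymptoticallyMonotone f)
    (hfi : LocallyIntegrableOn f (Ioi 0)) {D ε : ℝ} (hD : 1 ≤ D) (hε : 0 < ε) :
    ∀ᶠ s in atTop, f s ≤ (∫ t in (s + D - 1)..(s + D), f t) + ε := by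
  filter_upwards [hf D ε hε, eventually_gt_atTop 0] with s hfs hs
  rw [← sub_le_iff_le_add]
  calc f s - ε = ∫ _ in (s + D - 1)..(s + D), (f s - ε) := by simp
    _ ≤ ∫ t in (s + D - 1)..(s + D), f t :=
        intervalIntegral.integral_mono_on (sub_one_lt _).le intervalIntegrable_const
          (intervalIntegrable_sub_one hfi (by linarith)) fun t ht =>
          sub_le_iff_le_add.2 (hfs t ⟨by linarith [ht.1], ht.2⟩)

end AsymptoticallyMonotone

end UnitAverage

theorem shiftInv_state_average_eq_value_general {ξ : (ℕ → ℝ) → ℝ} (hξ : IsLinfState ξ)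
    (hT : ShiftInv ξ) {f : ℝ → ℝ} (hfb : ∃ C, ∀ t > 0, |f t| ≤ C)
    (hfi : LocallyIntegrableOn f (Ioi 0)) (hf : AsymptoticallyMonotone f) {a : ℝ} (ha : 0 < a)
    (b : ℝ) :
    ξ (fun k => if 1 ≤ a * k + b then ∫ t in (a * k + b - 1)..(a * k + b), f t else 0)
      = ξ (fun k => if 1 ≤ a * k + b then f (a * k + b) else 0) := by
  obtain ⟨C, hC⟩ := hfb
  have havg : IsBddSeq fun k : ℕ =>
      if 1 ≤ a * k + b then ∫ t in (a * k + b - 1)..(a * k + b), f t else 0 :=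
    .ite_zero fun _ => abs_integral_sub_one_le hC
  have hval : IsBddSeq fun k : ℕ => if 1 ≤ a * k + b then f (a * k + b) else 0 :=
    .ite_zero fun _ hk => hC _ (one_pos.trans_le hk)
  have hprog : Tendsto (fun k : ℕ => a * (k : ℝ) + b) atTop atTop :=
    tendsto_atTop_add_const_right _ _ (tendsto_natCast_atTop_atTop.const_mul_atTop ha)
  apply le_antisymm
  · refine hξ.le_of_forall_eventually_le_add hT havg hval fun ε hε => ?_
    filter_upwards [hprog.eventually (hf.eventually_integral_sub_one_le hfi hε),
      hprog.eventually_ge_atTop 1] with k hle hk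
    rwa [if_pos hk, if_pos hk]
  · obtain ⟨L, hL⟩ : ∃ L : ℕ, 1 ≤ a * L := by
      simpa only [nsmul_eq_mul, mul_comm] using Archimedean.arch 1 ha
    rw [← hT.map_add_right havg L]
    refine hξ.le_of_forall_eventually_le_add hT hval (havg.comp (· + L)) fun ε hε => ?_
    filter_upwards [hprog.eventually (hf.eventually_le_integral_add_sub_one hfi hL hε),
      hprog.eventually_ge_atTop 1] with k hle hk
    have hshift : a * ((k + L : ℕ) : ℝ) + b = a * k + b + a * L := by push_cast; ring
    rwa [hshift, if_pos hk, if_pos (by linarith)]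

/-- for a `T_1`-invariant state `ξ` on `ℓ^∞` and `a > 0`, `b ≥ 0`,
`ξ({∫_{ak+b−1}^{ak+b} f(t) dt}_k) = ξ({f(ak+b)}_k)`, where entries with
`ak + b < 1` are set to `0`. -/
theorem shiftInv_state_average_eq_value
    (ξ : (ℕ → ℝ) → ℝ) (hst : IsLinfState ξ) (hT : ShiftInv ξ)
    (f g : ℝ → ℝ) (hfb : ∃ C, ∀ t ≥ (0 : ℝ), |f t| ≤ C)
    (hfg : ∀ t > (0 : ℝ), f t = g t / t) (hg : MonotoneOn g (Set.Ici 0))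
    (a b : ℝ) (ha : 0 < a) (hb : 0 ≤ b) :
    ξ (fun k => if 1 ≤ a * k + b then ∫ t in (a * k + b - 1)..(a * k + b), f t else 0)
      = ξ (fun k => if 1 ≤ a * k + b then f (a * k + b) else 0) := by
  have hfb' : ∃ C, ∀ t > 0, |f t| ≤ C := hfb.imp fun _ hC t ht => hC t ht.le
  have hmul : MonotoneOn (fun t => t * f t) (Ioi 0) := (hg.mono Ioi_subset_Ici_self).congr
    fun t ht => by rw [hfg t ht, mul_div_cancel₀ _ (ne_of_gt ht)]
  exact shiftInv_state_average_eq_value_general hst hT hfb'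
    (locallyIntegrableOn_of_monotoneOn_mul hmul) (.of_monotoneOn_mul hfb' hmul) ha b
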